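/- arXiv:2409.08802 — 4 statements merged into one kernel-verified Lean document; each statement's English description precedes it below -/
import Mathlib

section
/- Let A, B be symmetric 3×3 real matrices. Then the SDP relaxation of the QAP is exact: the infimum of ⟨A⊗B, 𝐗⟩ over feasible pairs (X, 𝐗) equals the QAP value min_{σ ∈ S₃} Σ_{i,j} A_{ij}B_{σ(i)σ(j)}. -/
open Matrix BigOperators

noncomputable section

/-- `vec(X)` indexed by pairs `(i,k)` with `vec(X)_(i,k) = X i k`. -/
def vecM {n : ℕ} (X : Matrix (Fin n) (Fin n) ℝ) : Fin n × Fin n → ℝ :=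
  fun p => X p.1 p.2

/-- Kronecker product indexed so that `(A ⊗ B) (i,k) (j,l) = A i j * B k l`. -/
def kron {n : ℕ} (A B : Matrix (Fin n) (Fin n) ℝ) :
    Matrix (Fin n × Fin n) (Fin n × Fin n) ℝ :=
  Matrix.of fun p q => A p.1 q.1 * B p.2 q.2

/-- The all-ones `n × n` matrix. -/
def Eall (n : ℕ) : Matrix (Fin n) (Fin n) ℝ :=
  Matrix.of fun _ _ => (1 : ℝ)

/-- `X` is doubly stochastic. -/
def DS {n : ℕ} (X : Matrix (Fin n) (Fin n) ℝ) : Prop :=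
  (∀ i, ∑ j, X i j = 1) ∧ (∀ j, ∑ i, X i j = 1) ∧ (∀ i j, 0 ≤ X i j)

/-- Feasibility of the pair `(X, Y)` for the SDP relaxation of the QAP. -/
def SDPFeasible {n : ℕ} (X : Matrix (Fin n) (Fin n) ℝ)
    (Y : Matrix (Fin n × Fin n) (Fin n × Fin n) ℝ) : Prop :=
  (Y - vecMulVec (vecM X) (vecM X)).PosSemidef ∧
  (∀ k l, ∑ i, ∑ j, Y (i, k) (j, l) = 1) ∧
  (∀ k l, ∑ i, ∑ j, Y (k, i) (l, j) = 1) ∧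
  (∀ k i j, i ≠ j → Y (i, k) (j, k) = 0) ∧
  (∀ k i j, i ≠ j → Y (k, i) (k, j) = 0) ∧
  (∀ p q, 0 ≤ Y p q) ∧
  DS X

/-- The SDP objective `⟨A ⊗ B, Y⟩`. -/
def sdpObj {n : ℕ} (A B : Matrix (Fin n) (Fin n) ℝ)
    (Y : Matrix (Fin n × Fin n) (Fin n × Fin n) ℝ) : ℝ :=
  ∑ p, ∑ q, kron A B p q * Y p q

/-- The set `𝒮`: closure of matrices `Y` such that `G⊗E + E⊗H + Y` is PSD for some `G, H`. -/
def Scone (n : ℕ) : Set (Matrix (Fin n × Fin n) (Fin n × Fin n) ℝ) :=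
  closure {Y | ∃ G H : Matrix (Fin n) (Fin n) ℝ,
    (kron G (Eall n) + kron (Eall n) H + Y).PosSemidef}

/-- The set `𝒯`. -/
def Tcone (n : ℕ) : Set (Matrix (Fin n × Fin n) (Fin n × Fin n) ℝ) :=
  {Y | ∀ X : Matrix (Fin n) (Fin n) ℝ, DS X →
    ∑ p, ∑ q, vecM X p * Y p q * vecM X q ≥
      ∑ p, ∑ q, vecM (1 : Matrix (Fin n) (Fin n) ℝ) p * Y p q *
        vecM (1 : Matrix (Fin n) (Fin n) ℝ) q}

/-!
Testing the positive semidefinite matrix `𝐗 - vec(X)vec(X)ᵀ` on differences of block indicators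
forces every row of `𝐗`, read as an `n × n` matrix, to have all its row sums and all its column
sums equal to the diagonal entry of that row. For `n = 3`, once the two vanishing patterns are
taken into account, the `(i, k)` row has, besides its diagonal entry, a single `2 × 2` block left,
necessarily of the form `[a,b;b,a]`. Hence `𝐗_{(i,σ(i)),(j,σ(j))}` does not depend on `i ≠ j`, and
since a permutation of three points is determined by the images of two of them, these six numbers
write `𝐗` as a convex combination of the rank-one points `vec(P_σ)vec(P_σ)ᵀ`. A linear objective
is then minimized at one of these points.
-/

open scoped ComplexOrder in
lemma mulVec_eq_zero_of_posSemidef_sub_vecMulVec {ι 𝕜 : Type*} [Fintype ι] [RCLike 𝕜]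
    {M : Matrix ι ι 𝕜} {x y v : ι → 𝕜} (hM : (M - vecMulVec x y).PosSemidef)
    (hy : y ⬝ᵥ v = 0) (hv : star v ⬝ᵥ M *ᵥ v = 0) : M *ᵥ v = 0 := by
  have hsub : (M - vecMulVec x y) *ᵥ v = M *ᵥ v := by
    rw [sub_mulVec, vecMulVec_mulVec, hy, MulOpposite.op_zero, zero_smul, sub_zero]
  rw [← hsub] at hv ⊢
  exact (hM.dotProduct_mulVec_zero_iff v).1 hv

lemma dotProduct_single_one_comp_fst {α β R : Type*} [Fintype α] [Fintype β] [DecidableEq α]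
    [NonAssocSemiring R] (u : α × β → R) (a : α) :
    u ⬝ᵥ (Pi.single a 1 ∘ Prod.fst) = ∑ b, u (a, b) := by
  simp [dotProduct, Fintype.sum_prod_type_right, Pi.single_apply]

lemma existsUnique_perm_fin_three {i j k l : Fin 3} (hij : i ≠ j) (hkl : k ≠ l) :
    ∃! σ : Equiv.Perm (Fin 3), σ i = k ∧ σ j = l := by
  unfold ExistsUnique
  decide +revert

namespace SDPFeasible

section

variable {n : ℕ} {X : Matrix (Fin n) (Fin n) ℝ} {Y : Matrix (Fin n × Fin n) (Fin n × Fin n) ℝ}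

lemma sum_sum_block_eq_one (h : SDPFeasible X Y) (i j : Fin n) :
    ∑ k, ∑ l, Y (i, k) (j, l) = 1 :=
  h.2.2.1 i j

lemma apply_eq_zero_of_fst_ne (h : SDPFeasible X Y) {i j : Fin n} (hij : i ≠ j) (k : Fin n) :
    Y (i, k) (j, k) = 0 :=
  h.2.2.2.1 k i j hij

lemma apply_eq_zero_of_snd_ne (h : SDPFeasible X Y) (i : Fin n) {k l : Fin n} (hkl : k ≠ l) :
    Y (i, k) (i, l) = 0 :=
  h.2.2.2.2.1 i k l hkl

lemma apply_nonneg (h : SDPFeasible X Y) (p q : Fin n × Fin n) : 0 ≤ Y p q :=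
  h.2.2.2.2.2.1 p q

lemma transpose_submatrix_swap (h : SDPFeasible X Y) :
    SDPFeasible Xᵀ (Y.submatrix Prod.swap Prod.swap) := by
  obtain ⟨hpsd, hcol, hrow, hcol0, hrow0, hnonneg, hXrow, hXcol, hX⟩ := h
  exact ⟨hpsd.submatrix Prod.swap, hrow, hcol, hrow0, hcol0, fun _ _ ↦ hnonneg _ _,
    hXcol, hXrow, fun _ _ ↦ hX _ _⟩

lemma isSymm (h : SDPFeasible X Y) : Y.IsSymm := by
  ext p q
  have hpq : Y q p - vecM X q * vecM X p = Y p q - vecM X p * vecM X q := h.1.1.apply p q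
  rw [transpose_apply]
  linarith

lemma sum_row_eq_diag (h : SDPFeasible X Y) (p : Fin n × Fin n) (j : Fin n) :
    ∑ l, Y p (j, l) = Y p p := by
  have hX : ∀ i, ∑ l, X i l = 1 := h.2.2.2.2.2.2.1
  let e : Fin n → Fin n × Fin n → ℝ := fun i ↦ Pi.single i 1 ∘ Prod.fst
  have hmul (j : Fin n) (q : Fin n × Fin n) : (Y *ᵥ e j) q = ∑ l, Y q (j, l) :=
    dotProduct_single_one_comp_fst (Y q) j
  have hquad (i j : Fin n) : e i ⬝ᵥ Y *ᵥ e j = 1 := by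
    rw [dotProduct_comm, dotProduct_single_one_comp_fst]
    simp only [hmul, h.sum_sum_block_eq_one]
  have hker : Y *ᵥ (e j - e p.1) = 0 := by
    refine mulVec_eq_zero_of_posSemidef_sub_vecMulVec h.1 ?_ ?_
    · simp only [e, dotProduct_sub, dotProduct_single_one_comp_fst, vecM, hX, sub_self]
    · simp only [star_trivial, mulVec_sub, sub_dotProduct, dotProduct_sub, hquad, sub_self]
  calc ∑ l, Y p (j, l) = ∑ l, Y p (p.1, l) := by
        simpa only [mulVec_sub, Pi.sub_apply, hmul, Pi.zero_apply, sub_eq_zero] using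
          congrFun hker p
    _ = Y p p := Fintype.sum_eq_single p.2 fun l hl ↦ h.apply_eq_zero_of_snd_ne p.1 hl.symm

lemma sum_col_eq_diag (h : SDPFeasible X Y) (p : Fin n × Fin n) (l : Fin n) :
    ∑ j, Y p (j, l) = Y p p :=
  h.transpose_submatrix_swap.sum_row_eq_diag p.swap l

end

end SDPFeasible

/-- The lift `vec(P) vec(P)ᵀ` of the permutation matrix `P` of `σ`: the rank-one point of the
relaxation representing the assignment `σ`. -/
def permLift {n : ℕ} (σ : Equiv.Perm (Fin n)) : Matrix (Fin n × Fin n) (Fin n × Fin n) ℝ :=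
  vecMulVec (vecM (σ.permMatrix ℝ)) (vecM (σ.permMatrix ℝ))

section

variable {n : ℕ} (σ : Equiv.Perm (Fin n))

lemma permLift_apply (i k j l : Fin n) :
    permLift σ (i, k) (j, l) = if σ i = k ∧ σ j = l then 1 else 0 := by
  simp [permLift, vecMulVec_apply, vecM, PEquiv.toMatrix_apply, ← ite_and, and_comm]

lemma sum_mul_permLift (C : Matrix (Fin n × Fin n) (Fin n × Fin n) ℝ) :
    ∑ p, ∑ q, C p q * permLift σ p q = ∑ i, ∑ j, C (i, σ i) (j, σ j) := by
  simp [Fintype.sum_prod_type, permLift_apply, ite_and]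

lemma sdpFeasible_permLift : SDPFeasible (σ.permMatrix ℝ) (permLift σ) := by
  obtain ⟨hnonneg, hrow, hcol⟩ := mem_doublyStochastic_iff_sum.1
    (permMatrix_mem_doublyStochastic (R := ℝ) (σ := σ))
  refine ⟨?_, fun k l ↦ ?_, fun k l ↦ ?_, fun k i j hij ↦ ?_, fun k i j hij ↦ ?_, fun p q ↦ ?_,
    hrow, hcol, hnonneg⟩
  · rw [permLift, sub_self]
    exact PosSemidef.zero
  · simp only [permLift, vecMulVec_apply, vecM, ← Finset.mul_sum, hcol, mul_one]
  · simp only [permLift, vecMulVec_apply, vecM, ← Finset.mul_sum, hrow, mul_one]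
  · rw [permLift_apply, if_neg]
    exact fun ⟨hi, hj⟩ ↦ hij (σ.injective (hi.trans hj.symm))
  · rw [permLift_apply, if_neg]
    exact fun ⟨hi, hj⟩ ↦ hij (hi.symm.trans hj)
  · exact mul_nonneg (hnonneg _ _) (hnonneg _ _)

end

namespace SDPFeasible

variable {X : Matrix (Fin 3) (Fin 3) ℝ} {Y : Matrix (Fin 3 × Fin 3) (Fin 3 × Fin 3) ℝ}

lemma apply_perm_eq_apply_perm_right (h : SDPFeasible X Y) (σ : Equiv.Perm (Fin 3))
    {i j m : Fin 3} (hij : i ≠ j) (him : i ≠ m) :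
    Y (i, σ i) (j, σ j) = Y (i, σ i) (m, σ m) := by
  obtain rfl | hjm := eq_or_ne j m
  · rfl
  have huniv : (Finset.univ : Finset (Fin 3)) = {i, j, m} := by
    decide +revert
  have hrow := h.sum_row_eq_diag (i, σ i) j
  have hcol := h.sum_col_eq_diag (i, σ i) (σ m)
  rw [← Equiv.sum_comp σ] at hrow
  rw [huniv, Finset.sum_insert (by simp [hij, him]), Finset.sum_pair hjm] at hrow hcol
  rw [h.apply_eq_zero_of_fst_ne hij] at hrow
  rw [h.apply_eq_zero_of_snd_ne i (σ.injective.ne him)] at hcol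
  linarith

lemma apply_perm_eq_apply_perm (h : SDPFeasible X Y) (σ : Equiv.Perm (Fin 3))
    {i j a b : Fin 3} (hij : i ≠ j) (hab : a ≠ b) :
    Y (i, σ i) (j, σ j) = Y (a, σ a) (b, σ b) := by
  have hright {i j m : Fin 3} (hij : i ≠ j) (him : i ≠ m) :=
    h.apply_perm_eq_apply_perm_right σ hij him
  obtain rfl | hib := eq_or_ne i b
  · rw [hright hij hab.symm, h.isSymm.apply]
  · rw [hright hij hib, ← h.isSymm.apply, hright hib.symm hab.symm, h.isSymm.apply]

lemma apply_eq_sum_permLift_of_fst_ne (h : SDPFeasible X Y) {i j : Fin 3} (hij : i ≠ j)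
    (k l : Fin 3) :
    Y (i, k) (j, l) = ∑ σ, Y (0, σ 0) (1, σ 1) * permLift σ (i, k) (j, l) := by
  obtain rfl | hkl := eq_or_ne k l
  · simp only [h.apply_eq_zero_of_fst_ne hij, (sdpFeasible_permLift _).apply_eq_zero_of_fst_ne hij,
      mul_zero, Finset.sum_const_zero]
  obtain ⟨τ, ⟨rfl, rfl⟩, hτ⟩ := existsUnique_perm_fin_three hij hkl
  rw [Fintype.sum_eq_single τ, permLift_apply, if_pos ⟨rfl, rfl⟩, mul_one,
    h.apply_perm_eq_apply_perm τ hij zero_ne_one]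
  intro σ hσ
  rw [permLift_apply, if_neg (mt (hτ σ) hσ), mul_zero]

lemma eq_sum_smul_permLift (h : SDPFeasible X Y) :
    Y = ∑ σ, Y (0, σ 0) (1, σ 1) • permLift σ := by
  ext ⟨i, k⟩ ⟨j, l⟩
  simp only [Matrix.sum_apply, Matrix.smul_apply, smul_eq_mul]
  obtain rfl | hij := eq_or_ne i j
  · obtain rfl | hkl := eq_or_ne k l
    · obtain ⟨j, hj⟩ := exists_ne i
      simp only [← h.sum_row_eq_diag (i, k) j, h.apply_eq_sum_permLift_of_fst_ne hj.symm k,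
        ← (sdpFeasible_permLift _).sum_row_eq_diag (i, k) j, Finset.mul_sum]
      exact Finset.sum_comm
    · simp only [h.apply_eq_zero_of_snd_ne i hkl,
        (sdpFeasible_permLift _).apply_eq_zero_of_snd_ne i hkl, mul_zero, Finset.sum_const_zero]
  · exact h.apply_eq_sum_permLift_of_fst_ne hij k l

lemma sum_apply_perm_eq_one (h : SDPFeasible X Y) :
    ∑ σ : Equiv.Perm (Fin 3), Y (0, σ 0) (1, σ 1) = 1 := by
  calc ∑ σ : Equiv.Perm (Fin 3), Y (0, σ 0) (1, σ 1)
      = ∑ σ, Y (0, σ 0) (1, σ 1) * ∑ k, ∑ l, permLift σ (0, k) (1, l) := by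
        simp only [(sdpFeasible_permLift _).sum_sum_block_eq_one, mul_one]
    _ = ∑ k, ∑ l, ∑ σ, Y (0, σ 0) (1, σ 1) * permLift σ (0, k) (1, l) := by
        simp only [Finset.mul_sum, Finset.sum_comm (γ := Equiv.Perm (Fin 3))]
    _ = ∑ k, ∑ l, Y (0, k) (1, l) := by
        simp only [← h.apply_eq_sum_permLift_of_fst_ne zero_ne_one]
    _ = 1 := h.sum_sum_block_eq_one 0 1

lemma mem_convexHull_range_permLift (h : SDPFeasible X Y) :
    Y ∈ convexHull ℝ (Set.range permLift) := by
  rw [h.eq_sum_smul_permLift]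
  exact (convex_convexHull ℝ _).sum_mem (fun _ _ ↦ h.apply_nonneg _ _) h.sum_apply_perm_eq_one
    fun σ _ ↦ subset_convexHull ℝ _ ⟨σ, rfl⟩

lemma exists_perm_sum_le (h : SDPFeasible X Y) (C : Matrix (Fin 3 × Fin 3) (Fin 3 × Fin 3) ℝ) :
    ∃ σ : Equiv.Perm (Fin 3), ∑ i, ∑ j, C (i, σ i) (j, σ j) ≤ ∑ p, ∑ q, C p q * Y p q := by
  let f : Matrix (Fin 3 × Fin 3) (Fin 3 × Fin 3) ℝ →ₗ[ℝ] ℝ :=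
    ∑ p, ∑ q, C p q • entryLinearMap ℝ ℝ p q
  have hf (Z) : f Z = ∑ p, ∑ q, C p q * Z p q := by
    simp only [f, LinearMap.sum_apply, LinearMap.smul_apply, entryLinearMap_apply, smul_eq_mul]
  obtain ⟨_, ⟨σ, rfl⟩, hσ⟩ := (f.concaveOn convex_univ).exists_le_of_mem_convexHull
    (Set.subset_univ _) h.mem_convexHull_range_permLift
  refine ⟨σ, ?_⟩
  rwa [hf, hf, sum_mul_permLift] at hσ

end SDPFeasible

theorem stmt1_general (C : Matrix (Fin 3 × Fin 3) (Fin 3 × Fin 3) ℝ) :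
    sInf {r : ℝ | ∃ (X : Matrix (Fin 3) (Fin 3) ℝ)
        (Y : Matrix (Fin 3 × Fin 3) (Fin 3 × Fin 3) ℝ),
        SDPFeasible X Y ∧ ∑ p, ∑ q, C p q * Y p q = r} =
      ⨅ σ : Equiv.Perm (Fin 3), ∑ i, ∑ j, C (i, σ i) (j, σ j) := by
  refine csInf_eq_of_forall_ge_of_forall_gt_exists_lt
    ⟨_, _, _, sdpFeasible_permLift 1, rfl⟩ ?_ fun w hw ↦ ?_
  · rintro _ ⟨X, Y, h, rfl⟩
    obtain ⟨σ, hσ⟩ := h.exists_perm_sum_le C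
    exact (ciInf_le (Set.finite_range _).bddBelow σ).trans hσ
  · obtain ⟨σ, hσ⟩ := exists_lt_of_ciInf_lt hw
    exact ⟨_, ⟨_, _, sdpFeasible_permLift σ, sum_mul_permLift σ C⟩, hσ⟩

/-- Theorem 2: for `n = 3` the SDP relaxation of the QAP is exact. -/
theorem stmt1 (A B : Matrix (Fin 3) (Fin 3) ℝ) (hA : A.IsSymm) (hB : B.IsSymm) :
    sInf {r : ℝ | ∃ (X : Matrix (Fin 3) (Fin 3) ℝ)
        (Y : Matrix (Fin 3 × Fin 3) (Fin 3 × Fin 3) ℝ),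
        SDPFeasible X Y ∧ sdpObj A B Y = r} =
      ⨅ σ : Equiv.Perm (Fin 3), ∑ i, ∑ j, A i j * B (σ i) (σ j) :=
  stmt1_general (kron A B)
end
end

section
/- Let C and Δ be symmetric n×n real matrices, and set A = C + Δ and B = −C + Δ. Suppose 2(Δ_{ij}² + Δ_{kl}²) ≤ (C_{ij} − C_{kl} + Δ_{ij} + Δ_{kl})² holds for all i,j,k,l ∈ [n] with (i ≠ j and k ≠ l) or (i = j and k = l). Then (I, vec(I)vec(I)ᵀ) is an optimal solution to the SDP relaxation: it is feasible and every feasible pair (X, 𝐗) satisfies ⟨A⊗B, 𝐗⟩ ≥ Σ_{i,j} A_{ij}B_{ij}. -/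
open Matrix BigOperators

noncomputable section

/-!
The bound is linear programming duality. The marginal constraints fix the pairing of `Y` with every
matrix of the form `G ⊗ E + E ⊗ H`, `E` the all-ones matrix, to be `∑ G + ∑ H`, and the zero
constraints confine `Y ≥ 0` to the entries `(i, k), (j, l)` with `i = j ↔ k = l`. So `G` and `H`
certify a lower bound as soon as `G i j + H k l ≤ A i j * B k l` on these entries. Expanding
`(A i j + B k l) ^ 2` shows that the hypothesis says exactly this for `G = D² - A² / 2` and
`H = D² - B² / 2` (entrywise), and for `A = C + D`, `B = -C + D` the certified value is
`∑ i, ∑ j, A i j * B i j`.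
-/

section Marginals

variable {ι κ R : Type*} [Fintype ι] [Fintype κ] [NonAssocSemiring R]

theorem sum_fst_mul_eq_sum {Y : Matrix (ι × κ) (ι × κ) R}
    (hY : ∀ i j, ∑ k, ∑ l, Y (i, k) (j, l) = 1) (G : Matrix ι ι R) :
    ∑ p, ∑ q, G p.1 q.1 * Y p q = ∑ i, ∑ j, G i j := by
  simp only [Fintype.sum_prod_type]
  refine Finset.sum_congr rfl fun i _ => ?_
  rw [Finset.sum_comm]
  simp only [← Finset.mul_sum, hY, mul_one]

theorem sum_snd_mul_eq_sum {Y : Matrix (ι × κ) (ι × κ) R}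
    (hY : ∀ k l, ∑ i, ∑ j, Y (i, k) (j, l) = 1) (H : Matrix κ κ R) :
    ∑ p, ∑ q, H p.2 q.2 * Y p q = ∑ k, ∑ l, H k l := by
  rw [← sum_fst_mul_eq_sum (Y := Y.submatrix Prod.swap Prod.swap) hY H,
    ← (Equiv.prodComm κ ι).sum_comp]
  refine Finset.sum_congr rfl fun p _ => ?_
  rw [← (Equiv.prodComm κ ι).sum_comp]
  rfl

end Marginals

section LinearRelaxation

/-- The linear programming relaxation of the QAP: the constraints of `SDPFeasible` that involve
only the lifted matrix `Y`. The two families of zero constraints are merged into one support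
condition. -/
structure LPFeasible {ι R : Type*} [Fintype ι] [AddCommMonoid R] [One R] [LE R]
    (Y : Matrix (ι × ι) (ι × ι) R) : Prop where
  sum_fst_eq_one : ∀ k l, ∑ i, ∑ j, Y (i, k) (j, l) = 1
  sum_snd_eq_one : ∀ i j, ∑ k, ∑ l, Y (i, k) (j, l) = 1
  eq_zero : ∀ i j k l, ¬(i = j ↔ k = l) → Y (i, k) (j, l) = 0
  nonneg : ∀ p q, 0 ≤ Y p q

variable {ι R : Type*} [Fintype ι]

theorem LPFeasible.sum_add_sum_le [Semiring R] [PartialOrder R] [IsOrderedRing R]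
    {Y : Matrix (ι × ι) (ι × ι) R} (hY : LPFeasible Y)
    {W : Matrix (ι × ι) (ι × ι) R} {G H : Matrix ι ι R}
    (hW : ∀ i j k l, (i = j ↔ k = l) → G i j + H k l ≤ W (i, k) (j, l)) :
    ∑ i, ∑ j, G i j + ∑ k, ∑ l, H k l ≤ ∑ p, ∑ q, W p q * Y p q := by
  have entry_le : ∀ p q, (G p.1 q.1 + H p.2 q.2) * Y p q ≤ W p q * Y p q := by
    rintro ⟨i, k⟩ ⟨j, l⟩
    by_cases hs : i = j ↔ k = l
    · exact mul_le_mul_of_nonneg_right (hW i j k l hs) (hY.nonneg _ _)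
    · simp only [hY.eq_zero i j k l hs, mul_zero, le_refl]
  calc ∑ i, ∑ j, G i j + ∑ k, ∑ l, H k l
      = ∑ p, ∑ q, (G p.1 q.1 + H p.2 q.2) * Y p q := by
        simp only [add_mul, Finset.sum_add_distrib, sum_fst_mul_eq_sum hY.sum_snd_eq_one,
          sum_snd_mul_eq_sum hY.sum_fst_eq_one]
    _ ≤ ∑ p, ∑ q, W p q * Y p q :=
        Finset.sum_le_sum fun p _ => Finset.sum_le_sum fun q _ => entry_le p q

-- `Matrix.vec` stacks columns, so the row-indexed `vecM X` is `vec Xᵀ`.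
theorem lpFeasible_vecMulVec_permMatrix [DecidableEq ι] [Semiring R] [PartialOrder R]
    [IsOrderedRing R] (σ : Equiv.Perm ι) :
    LPFeasible (vecMulVec (vec (σ.permMatrix R)ᵀ) (vec (σ.permMatrix R)ᵀ)) := by
  obtain ⟨nonneg, row_sum, col_sum⟩ :=
    mem_doublyStochastic_iff_sum.1 (permMatrix_mem_doublyStochastic (R := R) (σ := σ))
  constructor
  · intro k l
    simp only [vecMulVec_apply, vec, transpose_apply, ← Finset.mul_sum, col_sum, mul_one]
  · intro i j
    simp only [vecMulVec_apply, vec, transpose_apply, ← Finset.mul_sum, row_sum, mul_one]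
  · intro i j k l hs
    simp only [vecMulVec_apply, vec, transpose_apply, Equiv.Perm.permMatrix,
      PEquiv.toMatrix_toPEquiv_apply, Pi.single_apply, ← ite_and, mul_ite, mul_one, mul_zero]
    refine if_neg ?_
    rintro ⟨rfl, rfl⟩
    exact hs σ.injective.eq_iff.symm
  · exact fun p q => mul_nonneg (nonneg _ _) (nonneg _ _)

end LinearRelaxation

section Perturbation

variable {R : Type*} [Field R] [LinearOrder R] [IsStrictOrderedRing R]

theorem sq_sub_half_sq_add_le_mul {a b x y : R} (h : 2 * (x ^ 2 + y ^ 2) ≤ (a + b) ^ 2) :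
    (x ^ 2 - a ^ 2 / 2) + (y ^ 2 - b ^ 2 / 2) ≤ a * b := by
  linarith [add_sq a b]

open scoped Kronecker in
theorem stmt2_general {ι : Type*} [Fintype ι] [DecidableEq ι] (C D : Matrix ι ι R)
    (h : ∀ i j k l, ((i ≠ j ∧ k ≠ l) ∨ (i = j ∧ k = l)) →
      2 * (D i j ^ 2 + D k l ^ 2) ≤ (C i j - C k l + D i j + D k l) ^ 2) :
    LPFeasible (vecMulVec (vec (1 : Matrix ι ι R)ᵀ) (vec (1 : Matrix ι ι R)ᵀ)) ∧
    ∀ Y : Matrix (ι × ι) (ι × ι) R, LPFeasible Y →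
      ∑ p, ∑ q, ((C + D) ⊗ₖ (-C + D)) p q * Y p q ≥
        ∑ i, ∑ j, (C + D) i j * (-C + D) i j := by
  refine ⟨permMatrix_one (n := ι) (R := R) ▸ lpFeasible_vecMulVec_permMatrix 1, fun Y hY => ?_⟩
  let G : Matrix ι ι R := of fun i j => D i j ^ 2 - (C + D) i j ^ 2 / 2
  let H : Matrix ι ι R := of fun k l => D k l ^ 2 - (-C + D) k l ^ 2 / 2
  have certificate : ∀ i j k l, (i = j ↔ k = l) →
      G i j + H k l ≤ ((C + D) ⊗ₖ (-C + D)) (i, k) (j, l) := by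
    intro i j k l hs
    refine sq_sub_half_sq_add_le_mul ((h i j k l (by tauto)).trans_eq ?_)
    simp only [Matrix.add_apply, Matrix.neg_apply]
    ring
  calc ∑ i, ∑ j, (C + D) i j * (-C + D) i j
      = ∑ i, ∑ j, G i j + ∑ i, ∑ j, H i j := by
        simp only [← Finset.sum_add_distrib, G, H, of_apply, Matrix.add_apply,
          Matrix.neg_apply]
        refine Finset.sum_congr rfl fun i _ => Finset.sum_congr rfl fun j _ => ?_
        ring
    _ ≤ _ := hY.sum_add_sum_le certificate

end Perturbation

theorem ds_iff_mem_doublyStochastic {n : ℕ} {X : Matrix (Fin n) (Fin n) ℝ} :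
    DS X ↔ X ∈ doublyStochastic ℝ (Fin n) := by
  rw [mem_doublyStochastic_iff_sum, DS]
  tauto

theorem sdpFeasible_iff {n : ℕ} {X : Matrix (Fin n) (Fin n) ℝ}
    {Y : Matrix (Fin n × Fin n) (Fin n × Fin n) ℝ} :
    SDPFeasible X Y ↔ (Y - vecMulVec (vecM X) (vecM X)).PosSemidef ∧ LPFeasible Y ∧
      X ∈ doublyStochastic ℝ (Fin n) := by
  rw [← ds_iff_mem_doublyStochastic]
  constructor
  · rintro ⟨hpsd, hfst, hsnd, hzero_snd, hzero_fst, hnonneg, hX⟩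
    refine ⟨hpsd, ⟨hfst, hsnd, fun i j k l hs => ?_, hnonneg⟩, hX⟩
    by_cases hij : i = j
    · subst hij
      exact hzero_fst i k l (by tauto)
    · obtain rfl : k = l := by tauto
      exact hzero_snd k i j hij
  · rintro ⟨hpsd, hY, hX⟩
    exact ⟨hpsd, hY.sum_fst_eq_one, hY.sum_snd_eq_one,
      fun k i j hij => hY.eq_zero i j k k (by tauto),
      fun k i j hij => hY.eq_zero k k i j (by tauto), hY.nonneg, hX⟩

/-- Theorem 3 (perturbation model): with `A = C + D`, `B = -C + D` and the quadratic
perturbation condition, `(I, vec(I)vec(I)ᵀ)` is optimal for the SDP relaxation. -/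
theorem stmt2 {n : ℕ} (C D : Matrix (Fin n) (Fin n) ℝ)
    (hC : C.IsSymm) (hD : D.IsSymm)
    (h : ∀ i j k l, ((i ≠ j ∧ k ≠ l) ∨ (i = j ∧ k = l)) →
      2 * (D i j ^ 2 + D k l ^ 2) ≤ (C i j - C k l + D i j + D k l) ^ 2) :
    SDPFeasible (1 : Matrix (Fin n) (Fin n) ℝ)
      (vecMulVec (vecM (1 : Matrix (Fin n) (Fin n) ℝ))
        (vecM (1 : Matrix (Fin n) (Fin n) ℝ))) ∧
    (∀ (X : Matrix (Fin n) (Fin n) ℝ)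
        (Y : Matrix (Fin n × Fin n) (Fin n × Fin n) ℝ),
      SDPFeasible X Y →
        sdpObj (C + D) (-C + D) Y ≥ ∑ i, ∑ j, (C + D) i j * (-C + D) i j) :=
  have hLP := stmt2_general C D h
  ⟨sdpFeasible_iff.2 ⟨by rw [sub_self]; exact .zero, hLP.1, one_mem _⟩,
    fun _ _ hY => hLP.2 _ (sdpFeasible_iff.1 hY).2.1⟩
end
end

section
/- Let A and −B be symmetric n×n matrices with entries in {0,1} and zero diagonal (adjacency matrices of graphs 𝒢_A and 𝒢_B), and suppose 𝒢_A is a subgraph of 𝒢_B, i.e., A_{ij} = 1 implies B_{ij} = −1 for all i,j. Then (I, vec(I)vec(I)ᵀ) is an optimal solution to the SDP relaxation: it is feasible and every feasible pair (X, 𝐗) satisfies ⟨A⊗B, 𝐗⟩ ≥ Σ_{i,j} A_{ij}B_{ij}. -/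
open Matrix BigOperators

noncomputable section

/-!
For fixed `i` and `j`, the entries `Y (i, k) (j, l)` of a feasible `Y` are probability weights on
the pairs `(k, l)`. The objective is therefore the sum over `(i, j)` of `A i j` times an average of
the entries of `B`, and each summand is smallest when all the weight sits on an entry of `B` that
minimizes `A i j * B k l`. The lift of the permutation `σ` puts it on `B (σ i) (σ j)`; if `A ≥ 0`,
that entry only has to be minimal when `A i j > 0`, which for graphs holds when `σ` embeds the
first graph into the second.
-/

section Relaxation

variable {n : ℕ}

theorem DS.sdpFeasible_vecMulVec {X : Matrix (Fin n) (Fin n) ℝ} (hX : DS X)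
    (hcol : ∀ k i j, i ≠ j → X i k * X j k = 0) (hrow : ∀ k i j, i ≠ j → X k i * X k j = 0) :
    SDPFeasible X (vecMulVec (vecM X) (vecM X)) := by
  obtain ⟨hrow_sum, hcol_sum, hnonneg⟩ := hX
  refine ⟨?_, fun k l => ?_, fun k l => ?_, hcol, hrow,
    fun p q => mul_nonneg (hnonneg _ _) (hnonneg _ _), hrow_sum, hcol_sum, hnonneg⟩
  · rw [sub_self]
    exact PosSemidef.zero
  · simp only [vecMulVec_apply, vecM, ← Fintype.sum_mul_sum, hcol_sum, mul_one]
  · simp only [vecMulVec_apply, vecM, ← Fintype.sum_mul_sum, hrow_sum, mul_one]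

theorem ds_permMatrix (σ : Equiv.Perm (Fin n)) : DS (σ.permMatrix ℝ) := by
  obtain ⟨hnonneg, hrow_sum, hcol_sum⟩ :=
    mem_doublyStochastic_iff_sum.mp (permMatrix_mem_doublyStochastic (R := ℝ) (σ := σ))
  exact ⟨hrow_sum, hcol_sum, hnonneg⟩

theorem sdpFeasible_permMatrix (σ : Equiv.Perm (Fin n)) :
    SDPFeasible (σ.permMatrix ℝ)
      (vecMulVec (vecM (σ.permMatrix ℝ)) (vecM (σ.permMatrix ℝ))) := by
  refine (ds_permMatrix σ).sdpFeasible_vecMulVec (fun k i j hij => ?_) fun k i j hij => ?_ <;>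
    simp only [Equiv.Perm.permMatrix, PEquiv.toMatrix_apply, Equiv.toPEquiv_apply,
      Option.mem_some_iff]
  · have hσ : σ i ≠ σ j := σ.injective.ne hij
    grind
  · grind

theorem sdpObj_eq_sum (A B : Matrix (Fin n) (Fin n) ℝ)
    (Y : Matrix (Fin n × Fin n) (Fin n × Fin n) ℝ) :
    sdpObj A B Y = ∑ i, ∑ j, ∑ k, ∑ l, A i j * B k l * Y (i, k) (j, l) := by
  simp only [sdpObj, kron, of_apply, Fintype.sum_prod_type]
  exact Finset.sum_congr rfl fun i _ => Finset.sum_comm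

theorem SDPFeasible.sum_le_sdpObj {X C A B : Matrix (Fin n) (Fin n) ℝ}
    {Y : Matrix (Fin n × Fin n) (Fin n × Fin n) ℝ} (hY : SDPFeasible X Y)
    (hC : ∀ i j k l, C i j ≤ A i j * B k l) :
    ∑ i, ∑ j, C i j ≤ sdpObj A B Y := by
  obtain ⟨-, -, hblock_sum, -, -, hnonneg, -⟩ := hY
  rw [sdpObj_eq_sum]
  refine Finset.sum_le_sum fun i _ => Finset.sum_le_sum fun j _ => ?_
  calc C i j = ∑ k, ∑ l, C i j * Y (i, k) (j, l) := by
        simp only [← Finset.mul_sum, hblock_sum, mul_one]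
    _ ≤ ∑ k, ∑ l, A i j * B k l * Y (i, k) (j, l) := by
        gcongr with k _ l _
        · exact hnonneg _ _
        · exact hC i j k l

theorem stmt3_general (A B : Matrix (Fin n) (Fin n) ℝ) (σ : Equiv.Perm (Fin n))
    (hAB : ∀ i j k l, A i j * B (σ i) (σ j) ≤ A i j * B k l) :
    SDPFeasible (σ.permMatrix ℝ)
      (vecMulVec (vecM (σ.permMatrix ℝ)) (vecM (σ.permMatrix ℝ))) ∧
    ∀ (X : Matrix (Fin n) (Fin n) ℝ) (Y : Matrix (Fin n × Fin n) (Fin n × Fin n) ℝ),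
      SDPFeasible X Y → sdpObj A B Y ≥ ∑ i, ∑ j, A i j * B (σ i) (σ j) :=
  ⟨sdpFeasible_permMatrix σ,
    fun _ _ hY => hY.sum_le_sdpObj (C := of fun i j => A i j * B (σ i) (σ j)) hAB⟩

theorem mul_le_mul_of_subgraph {A B : Matrix (Fin n) (Fin n) ℝ}
    (hA01 : ∀ i j, A i j = 0 ∨ A i j = 1) (hB01 : ∀ i j, B i j = 0 ∨ B i j = -1)
    (hsub : ∀ i j, A i j = 1 → B i j = -1) (i j k l : Fin n) :
    A i j * B i j ≤ A i j * B k l := by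
  rcases hA01 i j with hA0 | hA1
  · simp only [hA0, zero_mul, le_refl]
  · rcases hB01 k l with hB | hB <;> simp [hA1, hsub i j hA1, hB]

end Relaxation

/-- Theorem 4 (graph matching / subgraph isomorphism): if `A` and `-B` are adjacency
matrices and the graph of `A` is a subgraph of that of `-B`, then `(I, vec(I)vec(I)ᵀ)`
is optimal for the SDP relaxation. -/
theorem stmt3 {n : ℕ} (A B : Matrix (Fin n) (Fin n) ℝ)
    (hA : A.IsSymm) (hB : B.IsSymm)
    (hA01 : ∀ i j, A i j = 0 ∨ A i j = 1)
    (hB01 : ∀ i j, B i j = 0 ∨ B i j = -1)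
    (hAdiag : ∀ i, A i i = 0) (hBdiag : ∀ i, B i i = 0)
    (hsub : ∀ i j, A i j = 1 → B i j = -1) :
    SDPFeasible (1 : Matrix (Fin n) (Fin n) ℝ)
      (vecMulVec (vecM (1 : Matrix (Fin n) (Fin n) ℝ))
        (vecM (1 : Matrix (Fin n) (Fin n) ℝ))) ∧
    (∀ (X : Matrix (Fin n) (Fin n) ℝ)
        (Y : Matrix (Fin n × Fin n) (Fin n × Fin n) ℝ),
      SDPFeasible X Y → sdpObj A B Y ≥ ∑ i, ∑ j, A i j * B i j) := by
  simpa only [permMatrix_one, Equiv.Perm.one_apply] using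
    stmt3_general A B 1 (mul_le_mul_of_subgraph hA01 hB01 hsub)
end
end

section
/- Let A, B be symmetric n×n real matrices and let (X, 𝐗) be any feasible pair of the SDP relaxation. Then the arrow condition is automatically satisfied: 𝐗_{(i,j),(i,j)} = X_{ij} for all i, j ∈ [n]. -/
open Matrix BigOperators

noncomputable section

/- Fix `i`, let `x` be row `i` of `X`, let `D` be the diagonal block of `Y` on the pairs `(i, k)`,
and let `e` be the all-ones vector. As a block of `Y - vec(X) vec(X)ᴴ`, the matrix `M = D - x xᴴ`
is positive semidefinite, and `eᴴ M e = eᴴ D e - |xᴴ e|² = 1 - 1 = 0`. This forces `M e = 0`, that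
is, `D e = x`. Since `D` is a diagonal matrix, `D e` lists its diagonal entries. -/

theorem mulVec_one_eq_diag_of_isDiag {R κ : Type*} [NonAssocSemiring R] [Fintype κ]
    {Y : Matrix κ κ R} (hY : Y.IsDiag) : Y *ᵥ 1 = Y.diag := by
  ext k
  rw [mulVec, dotProduct_one, diag_apply]
  exact Fintype.sum_eq_single k fun l hl => hY hl.symm

section RankOneGap

open scoped ComplexOrder

variable {𝕜 ι κ : Type*} [RCLike 𝕜]

theorem mulVec_eq_smul_of_posSemidef_sub_vecMulVec [Fintype κ] {Y : Matrix κ κ 𝕜} {x u : κ → 𝕜}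
    (hgap : (Y - vecMulVec x (star x)).PosSemidef)
    (htight : star u ⬝ᵥ Y *ᵥ u = (star x ⬝ᵥ u) * (star u ⬝ᵥ x)) :
    Y *ᵥ u = (star x ⬝ᵥ u) • x := by
  have hmulVec : (Y - vecMulVec x (star x)) *ᵥ u = Y *ᵥ u - (star x ⬝ᵥ u) • x := by
    rw [sub_mulVec, vecMulVec_mulVec, op_smul_eq_smul]
  have hquad : star u ⬝ᵥ (Y - vecMulVec x (star x)) *ᵥ u = 0 := by
    rw [hmulVec, dotProduct_sub, dotProduct_smul, smul_eq_mul, htight, sub_self]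
  exact sub_eq_zero.mp (hmulVec ▸ (hgap.dotProduct_mulVec_zero_iff u).mp hquad)

theorem mulVec_one_eq_of_posSemidef_sub_vecMulVec [Fintype κ] {Y : Matrix κ κ 𝕜} {x : κ → 𝕜}
    (hgap : (Y - vecMulVec x (star x)).PosSemidef)
    (hx : ∑ k, x k = 1) (hY : ∑ k, ∑ l, Y k l = 1) : Y *ᵥ 1 = x := by
  have hone_x : star (1 : κ → 𝕜) ⬝ᵥ x = 1 := by rw [star_one, one_dotProduct, hx]
  have hx_one : star x ⬝ᵥ (1 : κ → 𝕜) = 1 := by rw [star_dotProduct, hone_x, star_one]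
  have htight : star (1 : κ → 𝕜) ⬝ᵥ Y *ᵥ 1 = (star x ⬝ᵥ 1) * (star 1 ⬝ᵥ x) := by
    rw [hone_x, hx_one, mul_one, star_one, one_dotProduct]
    simpa only [mulVec, dotProduct_one] using hY
  rw [mulVec_eq_smul_of_posSemidef_sub_vecMulVec hgap htight, hx_one, one_smul]

theorem stmt17_general [Fintype κ] {X : Matrix ι κ 𝕜} {Y : Matrix (ι × κ) (ι × κ) 𝕜} (i : ι)
    (hgap : (Y - vecMulVec (Function.uncurry X) (star (Function.uncurry X))).PosSemidef)
    (hX : ∑ k, X i k = 1) (hY : ∑ k, ∑ l, Y (i, k) (i, l) = 1)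
    (hdiag : ∀ k l, k ≠ l → Y (i, k) (i, l) = 0) (j : κ) :
    Y (i, j) (i, j) = X i j := by
  let block : Matrix κ κ 𝕜 := Y.submatrix (Prod.mk i) (Prod.mk i)
  have hblock : (block - vecMulVec (X i) (star (X i))).PosSemidef := hgap.submatrix (Prod.mk i)
  have hrow : block *ᵥ 1 = X i := mulVec_one_eq_of_posSemidef_sub_vecMulVec hblock hX hY
  have hisDiag : block.IsDiag := fun k l hkl => hdiag k l hkl
  exact congrFun ((mulVec_one_eq_diag_of_isDiag hisDiag).symm.trans hrow) j

end RankOneGap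

/-- The arrow condition is automatically satisfied by any feasible pair of the SDP
relaxation. -/
theorem stmt17 {n : ℕ} (A B : Matrix (Fin n) (Fin n) ℝ)
    (hA : A.IsSymm) (hB : B.IsSymm)
    (X : Matrix (Fin n) (Fin n) ℝ)
    (Y : Matrix (Fin n × Fin n) (Fin n × Fin n) ℝ)
    (hfeas : SDPFeasible X Y) :
    ∀ i j, Y (i, j) (i, j) = X i j := by
  obtain ⟨hgap, -, hblock, -, hdiag, -, hX, -, -⟩ := hfeas
  exact fun i => stmt17_general i hgap (hX i) (hblock i i) (hdiag i)
end
end
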